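/- (Interpolation with negative Besov regularity) There exists a constant C > 0 such that for all z in the Schwartz space on ℝ³, ‖z‖_{L²(ℝ³)} ≤ C·‖∇z‖_{L²(ℝ³)}^{3/5}·‖z‖_{Ḃ^{−3/2}_{2,∞}}^{2/5}, where ‖z‖_{Ḃ^{−3/2}_{2,∞}} := sup_{t>0} t^{3/4}·‖e^{tΔ}z‖_{L²(ℝ³)}. -/

import Mathlib

open MeasureTheory Real

noncomputable def heatSemigroup (t : ℝ) (z : EuclideanSpace ℝ (Fin 3) → ℝ)
    (x : EuclideanSpace ℝ (Fin 3)) : ℝ :=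
  ∫ y, (4 * π * t) ^ (-(3:ℝ)/2) * Real.exp (-‖x - y‖ ^ 2 / (4 * t)) * z y

/-!
If `ν` is a probability measure, then `f - f ∗ ν` is an average of the differences `f - f (· - y)`,
whose `Lᵖ` norms are at most `‖y‖ ‖∇f‖_p`; hence `‖f - f ∗ ν‖_p` is at most `‖∇f‖_p` times the
`p`-th moment of `ν`. The heat kernel at time `t` has `p`-th moment of order `√t`, so
`‖f‖_p ≤ ‖e^{tΔ} f‖_p + K √t ‖∇f‖_p ≤ t^{-s/2} ‖f‖_{Ḃ^{-s}_{p,∞}} + K √t ‖∇f‖_p`, and the claim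
follows by choosing the `t` that balances the two terms.
-/

open scoped ENNReal

section Averaging

theorem rpow_lintegral_le_lintegral_rpow {α : Type*} [MeasurableSpace α] {ν : Measure α}
    [IsProbabilityMeasure ν] {g : α → ℝ≥0∞} (hg : AEMeasurable g ν) {q : ℝ} (hq : 1 ≤ q) :
    (∫⁻ a, g a ∂ν) ^ q ≤ ∫⁻ a, g a ^ q ∂ν := by
  have hq0 : 0 < q := one_pos.trans_le hq
  have h := eLpNorm'_le_eLpNorm'_of_exponent_le one_pos hq ν hg.aestronglyMeasurable
  simp only [eLpNorm'_eq_lintegral_enorm, enorm_eq_self, ENNReal.rpow_one, div_one] at h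
  simpa only [one_div, ENNReal.le_rpow_inv_iff hq0] using h

theorem lintegral_rpow_lintegral_le {α β : Type*} [MeasurableSpace α] [MeasurableSpace β]
    {μ : Measure α} [SFinite μ] {ν : Measure β} [IsProbabilityMeasure ν] {g : α → β → ℝ≥0∞}
    (hg : Measurable (Function.uncurry g)) {q : ℝ} (hq : 1 ≤ q) :
    ∫⁻ x, (∫⁻ y, g x y ∂ν) ^ q ∂μ ≤ ∫⁻ y, ∫⁻ x, g x y ^ q ∂μ ∂ν :=
  calc ∫⁻ x, (∫⁻ y, g x y ∂ν) ^ q ∂μ ≤ ∫⁻ x, ∫⁻ y, g x y ^ q ∂ν ∂μ :=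
        lintegral_mono fun _ =>
          rpow_lintegral_le_lintegral_rpow hg.of_uncurry_left.aemeasurable hq
    _ = ∫⁻ y, ∫⁻ x, g x y ^ q ∂μ ∂ν :=
        lintegral_lintegral_swap (hg.pow_const q).aemeasurable

theorem enorm_sub_integral_le_lintegral_enorm_sub {α F : Type*} [MeasurableSpace α]
    [NormedAddCommGroup F] [NormedSpace ℝ F] [CompleteSpace F] {ν : Measure α}
    [IsProbabilityMeasure ν] {g : α → F} (hg : AEStronglyMeasurable g ν) (c : F) :
    ‖c - ∫ a, g a ∂ν‖ₑ ≤ ∫⁻ a, ‖c - g a‖ₑ ∂ν := by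
  by_cases hint : Integrable (fun a => c - g a) ν
  · have hgi : Integrable g ν :=
      ((integrable_const c).sub hint).congr (.of_forall fun a => sub_sub_cancel c (g a))
    have hc : c - ∫ a, g a ∂ν = ∫ a, c - g a ∂ν := by
      simp [integral_sub (integrable_const c) hgi]
    exact hc ▸ enorm_integral_le_lintegral_enorm _
  · have htop : ∫⁻ a, ‖c - g a‖ₑ ∂ν = ∞ := by
      by_contra h
      exact hint ⟨aestronglyMeasurable_const.sub hg, lt_top_iff_ne_top.mpr h⟩
    exact htop ▸ le_top

variable {E F : Type*} [NormedAddCommGroup E] [NormedSpace ℝ E] [NormedAddCommGroup F]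
  [NormedSpace ℝ F] {f : E → F}

theorem enorm_sub_comp_sub_le_lintegral (hf : ContDiff ℝ 1 f) (x y : E) :
    ‖f x - f (x - y)‖ₑ ≤ ∫⁻ s in Set.Icc (0 : ℝ) 1, ‖fderiv ℝ f (x - s • y)‖ₑ * ‖y‖ₑ := by
  have hderiv (s : ℝ) : deriv (fun s : ℝ => f (x - s • y)) s = fderiv ℝ f (x - s • y) (-y) := by
    have hline : HasDerivAt (fun s : ℝ => x - s • y) (-y) s := by
      simpa using ((hasDerivAt_id s).smul_const y).const_sub x
    exact ((hf.differentiable one_ne_zero _).hasFDerivAt.comp_hasDerivAt s hline).deriv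
  have hpath : ContDiff ℝ 1 fun s : ℝ => f (x - s • y) := by fun_prop
  calc ‖f x - f (x - y)‖ₑ = ‖f (x - (1 : ℝ) • y) - f (x - (0 : ℝ) • y)‖ₑ := by
        rw [← enorm_neg]; simp
    _ ≤ ∫⁻ s in Set.Icc (0 : ℝ) 1, ‖fderiv ℝ f (x - s • y) (-y)‖ₑ := by
        simpa only [hderiv] using
          enorm_sub_le_lintegral_deriv_of_contDiffOn_Icc hpath.contDiffOn zero_le_one
    _ ≤ ∫⁻ s in Set.Icc (0 : ℝ) 1, ‖fderiv ℝ f (x - s • y)‖ₑ * ‖y‖ₑ :=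
        lintegral_mono fun s => by
          simpa using (fderiv ℝ f (x - s • y)).le_opENorm (-y)

variable [MeasurableSpace E] [BorelSpace E] {μ : Measure E} [SFinite μ]
  [μ.IsAddRightInvariant]

theorem lintegral_enorm_sub_comp_sub_rpow_le (hf : ContDiff ℝ 1 f) {q : ℝ} (hq : 1 ≤ q) (y : E) :
    ∫⁻ x, ‖f x - f (x - y)‖ₑ ^ q ∂μ ≤ ‖y‖ₑ ^ q * ∫⁻ x, ‖fderiv ℝ f x‖ₑ ^ q ∂μ := by
  have hq0 : 0 ≤ q := zero_le_one.trans hq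
  have hf' : Continuous (fderiv ℝ f) := hf.continuous_fderiv one_ne_zero
  have : IsProbabilityMeasure (volume.restrict (Set.Icc (0 : ℝ) 1)) := ⟨by simp⟩
  calc ∫⁻ x, ‖f x - f (x - y)‖ₑ ^ q ∂μ
    _ ≤ ∫⁻ x, (∫⁻ s in Set.Icc (0 : ℝ) 1, ‖fderiv ℝ f (x - s • y)‖ₑ * ‖y‖ₑ) ^ q ∂μ :=
        lintegral_mono fun x =>
          ENNReal.rpow_le_rpow (enorm_sub_comp_sub_le_lintegral hf x y) hq0
    _ ≤ ∫⁻ s in Set.Icc (0 : ℝ) 1, ∫⁻ x, (‖fderiv ℝ f (x - s • y)‖ₑ * ‖y‖ₑ) ^ q ∂μ := by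
        have hcont : Continuous fun r : E × ℝ => fderiv ℝ f (r.1 - r.2 • y) := by fun_prop
        exact lintegral_rpow_lintegral_le (hcont.enorm.measurable.mul_const _) hq
    _ = ∫⁻ _ in Set.Icc (0 : ℝ) 1, ‖y‖ₑ ^ q * ∫⁻ x, ‖fderiv ℝ f x‖ₑ ^ q ∂μ := by
        refine lintegral_congr fun s => ?_
        rw [lintegral_sub_right_eq_self (fun x => (‖fderiv ℝ f x‖ₑ * ‖y‖ₑ) ^ q) (s • y)]
        simp_rw [ENNReal.mul_rpow_of_nonneg _ _ hq0]
        rw [lintegral_mul_const _ (hf'.enorm.measurable.pow_const q), mul_comm]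
    _ = ‖y‖ₑ ^ q * ∫⁻ x, ‖fderiv ℝ f x‖ₑ ^ q ∂μ := by simp

variable [SecondCountableTopology E] [CompleteSpace F]

theorem lintegral_enorm_sub_integral_comp_sub_rpow_le (hf : ContDiff ℝ 1 f) {ν : Measure E}
    [IsProbabilityMeasure ν] {q : ℝ} (hq : 1 ≤ q) :
    ∫⁻ x, ‖f x - ∫ y, f (x - y) ∂ν‖ₑ ^ q ∂μ ≤
      (∫⁻ y, ‖y‖ₑ ^ q ∂ν) * ∫⁻ x, ‖fderiv ℝ f x‖ₑ ^ q ∂μ := by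
  have hfc : Continuous f := hf.continuous
  calc ∫⁻ x, ‖f x - ∫ y, f (x - y) ∂ν‖ₑ ^ q ∂μ
    _ ≤ ∫⁻ x, (∫⁻ y, ‖f x - f (x - y)‖ₑ ∂ν) ^ q ∂μ := by
        refine lintegral_mono fun x => ENNReal.rpow_le_rpow ?_ (zero_le_one.trans hq)
        have hcont : Continuous fun y => f (x - y) := by fun_prop
        exact enorm_sub_integral_le_lintegral_enorm_sub hcont.aestronglyMeasurable (f x)
    _ ≤ ∫⁻ y, ∫⁻ x, ‖f x - f (x - y)‖ₑ ^ q ∂μ ∂ν := by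
        have hcont : Continuous fun r : E × E => f r.1 - f (r.1 - r.2) := by fun_prop
        exact lintegral_rpow_lintegral_le hcont.enorm.measurable hq
    _ ≤ ∫⁻ y, ‖y‖ₑ ^ q * ∫⁻ x, ‖fderiv ℝ f x‖ₑ ^ q ∂μ ∂ν :=
        lintegral_mono fun y => lintegral_enorm_sub_comp_sub_rpow_le hf hq y
    _ = (∫⁻ y, ‖y‖ₑ ^ q ∂ν) * ∫⁻ x, ‖fderiv ℝ f x‖ₑ ^ q ∂μ :=
        lintegral_mul_const _ (measurable_enorm.pow_const q)

theorem eLpNorm_sub_integral_comp_sub_le (hf : ContDiff ℝ 1 f) {ν : Measure E}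
    [IsProbabilityMeasure ν] {p : ℝ≥0∞} (hp : 1 ≤ p) (hp_top : p ≠ ∞) :
    eLpNorm (fun x => f x - ∫ y, f (x - y) ∂ν) p μ ≤
      eLpNorm id p ν * eLpNorm (fderiv ℝ f) p μ := by
  have hp0 : p ≠ 0 := (one_pos.trans_le hp).ne'
  have hq : 1 ≤ p.toReal := ENNReal.toReal_mono hp_top hp
  simp only [eLpNorm_eq_lintegral_rpow_enorm_toReal hp0 hp_top, id]
  rw [← ENNReal.mul_rpow_of_nonneg _ _ (by positivity)]
  exact ENNReal.rpow_le_rpow (lintegral_enorm_sub_integral_comp_sub_rpow_le hf hq) (by positivity)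

end Averaging

section HeatFlow

open Module (finrank)

variable {V : Type*} [NormedAddCommGroup V] [InnerProductSpace ℝ V]

/-- The Gauss–Weierstrass kernel `(4πt)^{-n/2} exp(-‖y‖² / 4t)` on an `n`-dimensional Euclidean
space, that is, the fundamental solution of the heat equation `∂ₜu = Δu` at time `t`. -/
noncomputable def heatKernel (t : ℝ) (y : V) : ℝ :=
  (4 * π * t) ^ (-(finrank ℝ V : ℝ) / 2) * exp (-‖y‖ ^ 2 / (4 * t))

theorem heatKernel_nonneg {t : ℝ} (ht : 0 < t) (y : V) : 0 ≤ heatKernel t y := by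
  unfold heatKernel; positivity

@[fun_prop]
theorem continuous_heatKernel (t : ℝ) : Continuous (heatKernel t : V → ℝ) := by
  unfold heatKernel; fun_prop

theorem rpow_mul_exp_neg_le {q u : ℝ} (hq : 0 < q) (hu : 0 ≤ u) : u ^ q * exp (-u) ≤ q ^ q := by
  have hexp : (u / q) ^ q ≤ exp u := by
    calc (u / q) ^ q ≤ exp (u / q) ^ q := by
          gcongr; linarith [add_one_le_exp (u / q)]
      _ = exp u := by rw [← exp_mul, div_mul_cancel₀ u hq.ne']
  rw [div_rpow hu hq.le, div_le_iff₀ (by positivity)] at hexp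
  rw [exp_neg, ← div_eq_mul_inv, div_le_iff₀ (exp_pos u)]
  linarith

theorem heatKernel_eq_heatKernel_two_mul_mul_exp {t : ℝ} (ht : 0 < t) (y : V) :
    heatKernel t y =
      2 ^ ((finrank ℝ V : ℝ) / 2) * heatKernel (2 * t) y * exp (-(‖y‖ ^ 2 / (8 * t))) := by
  have htwo : (2 : ℝ) ^ ((finrank ℝ V : ℝ) / 2) * 2 ^ (-(finrank ℝ V : ℝ) / 2) = 1 := by
    rw [← rpow_add two_pos, neg_div, add_neg_cancel, rpow_zero]
  have hexp : -‖y‖ ^ 2 / (4 * t) = -‖y‖ ^ 2 / (4 * (2 * t)) + -(‖y‖ ^ 2 / (8 * t)) := by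
    field_simp; ring
  rw [heatKernel, heatKernel, hexp, exp_add, show 4 * π * (2 * t) = 2 * (4 * π * t) by ring,
    mul_rpow zero_le_two (by positivity)]
  linear_combination (-((4 * π * t) ^ (-(finrank ℝ V : ℝ) / 2) *
    (exp (-‖y‖ ^ 2 / (4 * (2 * t))) * exp (-(‖y‖ ^ 2 / (8 * t)))))) * htwo

theorem norm_rpow_mul_exp_neg_le {E : Type*} [SeminormedAddGroup E] {t q : ℝ} (ht : 0 < t)
    (hq : 0 < q) (y : E) :
    ‖y‖ ^ q * exp (-(‖y‖ ^ 2 / (8 * t))) ≤ (4 * q * t) ^ (q / 2) := by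
  have hnorm : ‖y‖ ^ q = (8 * t) ^ (q / 2) * (‖y‖ ^ 2 / (8 * t)) ^ (q / 2) := by
    rw [← mul_rpow (by positivity) (by positivity), mul_div_cancel₀ _ (by positivity),
      ← rpow_natCast_mul (norm_nonneg y)]
    congr 1; push_cast; ring
  calc ‖y‖ ^ q * exp (-(‖y‖ ^ 2 / (8 * t)))
    _ = (8 * t) ^ (q / 2) * ((‖y‖ ^ 2 / (8 * t)) ^ (q / 2) * exp (-(‖y‖ ^ 2 / (8 * t)))) := by
        rw [hnorm, mul_assoc]
    _ ≤ (8 * t) ^ (q / 2) * (q / 2) ^ (q / 2) := by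
        gcongr; exact rpow_mul_exp_neg_le (half_pos hq) (by positivity)
    _ = (4 * q * t) ^ (q / 2) := by
        rw [← mul_rpow (by positivity) (by positivity)]; ring_nf

theorem norm_rpow_mul_heatKernel_le {t q : ℝ} (ht : 0 < t) (hq : 0 < q) (y : V) :
    ‖y‖ ^ q * heatKernel t y ≤
      2 ^ ((finrank ℝ V : ℝ) / 2) * (4 * q * t) ^ (q / 2) * heatKernel (2 * t) y := by
  have hkernel := heatKernel_nonneg (mul_pos two_pos ht) y
  calc ‖y‖ ^ q * heatKernel t y
    _ = 2 ^ ((finrank ℝ V : ℝ) / 2) * (‖y‖ ^ q * exp (-(‖y‖ ^ 2 / (8 * t)))) *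
          heatKernel (2 * t) y := by
        rw [heatKernel_eq_heatKernel_two_mul_mul_exp ht]; ring
    _ ≤ 2 ^ ((finrank ℝ V : ℝ) / 2) * (4 * q * t) ^ (q / 2) * heatKernel (2 * t) y := by
        gcongr; exact norm_rpow_mul_exp_neg_le ht hq y

variable [MeasurableSpace V] [BorelSpace V] [FiniteDimensional ℝ V]

theorem integral_heatKernel {t : ℝ} (ht : 0 < t) : ∫ y : V, heatKernel t y = 1 := by
  have hexp (y : V) : -‖y‖ ^ 2 / (4 * t) = -(4 * t)⁻¹ * ‖y‖ ^ 2 := by ring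
  simp only [heatKernel, hexp]
  rw [integral_const_mul, GaussianFourier.integral_rexp_neg_mul_sq_norm (by positivity),
    show π / (4 * t)⁻¹ = 4 * π * t by field_simp, ← rpow_add (by positivity), neg_div,
    neg_add_cancel, rpow_zero]

theorem lintegral_ofReal_heatKernel {t : ℝ} (ht : 0 < t) :
    ∫⁻ y : V, ENNReal.ofReal (heatKernel t y) = 1 := by
  have hint : Integrable (heatKernel t : V → ℝ) :=
    Integrable.of_integral_ne_zero (by rw [integral_heatKernel ht]; exact one_ne_zero)
  rw [← ofReal_integral_eq_lintegral_ofReal hint (.of_forall (heatKernel_nonneg ht)),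
    integral_heatKernel ht, ENNReal.ofReal_one]

variable (V) in
/-- The centred Gaussian measure with density `heatKernel t`; the heat flow at time `t` is
convolution with it. -/
noncomputable def heatMeasure (t : ℝ) : Measure V :=
  volume.withDensity fun y => ENNReal.ofReal (heatKernel t y)

theorem isProbabilityMeasure_heatMeasure {t : ℝ} (ht : 0 < t) :
    IsProbabilityMeasure (heatMeasure V t) :=
  ⟨by rw [heatMeasure, withDensity_apply _ .univ, setLIntegral_univ,
    lintegral_ofReal_heatKernel ht]⟩

theorem lintegral_enorm_rpow_heatMeasure_le {t q : ℝ} (ht : 0 < t) (hq : 0 < q) :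
    ∫⁻ y, ‖y‖ₑ ^ q ∂heatMeasure V t ≤
      ENNReal.ofReal (2 ^ ((finrank ℝ V : ℝ) / 2) * (4 * q * t) ^ (q / 2)) := by
  set c := (2 : ℝ) ^ ((finrank ℝ V : ℝ) / 2) * (4 * q * t) ^ (q / 2)
  have hmeas (t : ℝ) : Measurable fun y : V => ENNReal.ofReal (heatKernel t y) := by fun_prop
  calc ∫⁻ y, ‖y‖ₑ ^ q ∂heatMeasure V t
    _ = ∫⁻ y : V, ENNReal.ofReal (heatKernel t y) * ‖y‖ₑ ^ q :=
        lintegral_withDensity_eq_lintegral_mul _ (hmeas t) (measurable_enorm.pow_const q)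
    _ ≤ ∫⁻ y : V, ENNReal.ofReal c * ENNReal.ofReal (heatKernel (2 * t) y) := by
        refine lintegral_mono fun y => ?_
        rw [← ofReal_norm, ENNReal.ofReal_rpow_of_nonneg (norm_nonneg y) hq.le, mul_comm,
          ← ENNReal.ofReal_mul (by positivity), ← ENNReal.ofReal_mul (by positivity)]
        exact ENNReal.ofReal_le_ofReal (norm_rpow_mul_heatKernel_le ht hq y)
    _ = ENNReal.ofReal c := by
        rw [lintegral_const_mul _ (hmeas _), lintegral_ofReal_heatKernel (by positivity), mul_one]

theorem eLpNorm_id_heatMeasure_le {t : ℝ} (ht : 0 < t) {p : ℝ≥0∞} (hp0 : p ≠ 0) (hp_top : p ≠ ∞) :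
    eLpNorm id p (heatMeasure V t) ≤
      ENNReal.ofReal (2 ^ (finrank ℝ V / (2 * p.toReal)) * √(4 * p.toReal) * √t) := by
  have hq : 0 < p.toReal := ENNReal.toReal_pos hp0 hp_top
  have hconst : (2 ^ ((finrank ℝ V : ℝ) / 2) * (4 * p.toReal * t) ^ (p.toReal / 2)) ^
      (1 / p.toReal) = 2 ^ (finrank ℝ V / (2 * p.toReal)) * √(4 * p.toReal) * √t := by
    rw [mul_rpow (by positivity) (by positivity), ← rpow_mul zero_le_two,
      ← rpow_mul (by positivity), mul_assoc (2 ^ _), ← sqrt_mul (by positivity), sqrt_eq_rpow]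
    congr 2 <;> field_simp
  rw [eLpNorm_eq_lintegral_rpow_enorm_toReal hp0 hp_top, ← hconst,
    ← ENNReal.ofReal_rpow_of_nonneg (by positivity) (by positivity)]
  exact ENNReal.rpow_le_rpow (lintegral_enorm_rpow_heatMeasure_le ht hq) (by positivity)

variable {F : Type*} [NormedAddCommGroup F] [NormedSpace ℝ F]

/-- The heat semigroup `e^{tΔ}` acting on vector-valued functions on a Euclidean space, as an
integral against the heat kernel. -/
noncomputable def heatFlow (t : ℝ) (f : V → F) (x : V) : F :=
  ∫ y, heatKernel t (x - y) • f y

theorem heatFlow_eq_integral_heatMeasure {t : ℝ} (ht : 0 < t) (f : V → F) (x : V) :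
    heatFlow t f x = ∫ y, f (x - y) ∂heatMeasure V t := by
  rw [heatMeasure, integral_withDensity_eq_integral_toReal_smul (by fun_prop) (by simp), heatFlow,
    ← integral_sub_left_eq_self _ volume x]
  simp [ENNReal.toReal_ofReal (heatKernel_nonneg ht _)]

theorem aestronglyMeasurable_heatFlow {f : V → F} (hf : Continuous f) (t : ℝ) :
    AEStronglyMeasurable (heatFlow t f) volume := by
  have hcont : Continuous fun r : V × V => heatKernel t (r.1 - r.2) • f r.2 := by fun_prop
  exact hcont.stronglyMeasurable.integral_prod_right.aestronglyMeasurable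

variable [CompleteSpace F] {f : V → F} {p : ℝ≥0∞}

theorem eLpNorm_sub_heatFlow_le (hf : ContDiff ℝ 1 f) (hp : 1 ≤ p) (hp_top : p ≠ ∞) {t : ℝ}
    (ht : 0 < t) :
    eLpNorm (f - heatFlow t f) p volume ≤
      ENNReal.ofReal (2 ^ (finrank ℝ V / (2 * p.toReal)) * √(4 * p.toReal) * √t) *
        eLpNorm (fderiv ℝ f) p volume := by
  have := isProbabilityMeasure_heatMeasure (V := V) ht
  have hflow : f - heatFlow t f = fun x => f x - ∫ y, f (x - y) ∂heatMeasure V t :=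
    funext fun x => congrArg (f x - ·) (heatFlow_eq_integral_heatMeasure ht f x)
  rw [hflow]
  refine (eLpNorm_sub_integral_comp_sub_le hf hp hp_top).trans ?_
  gcongr
  exact eLpNorm_id_heatMeasure_le ht (one_pos.trans_le hp).ne' hp_top

theorem toReal_eLpNorm_le_toReal_eLpNorm_heatFlow_add (hf : ContDiff ℝ 1 f) (hp : 1 ≤ p)
    (hp_top : p ≠ ∞) (hfp : MemLp f p) (hf' : MemLp (fderiv ℝ f) p) {t : ℝ} (ht : 0 < t) :
    (eLpNorm f p).toReal ≤ (eLpNorm (heatFlow t f) p).toReal +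
      2 ^ (finrank ℝ V / (2 * p.toReal)) * √(4 * p.toReal) * √t *
        (eLpNorm (fderiv ℝ f) p).toReal := by
  have hle := eLpNorm_sub_heatFlow_le hf hp hp_top ht
  have hbound := hle.trans_lt (ENNReal.mul_lt_top ENNReal.ofReal_lt_top hf'.eLpNorm_lt_top)
  have hsub : MemLp (f - heatFlow t f) p :=
    ⟨hfp.1.sub (aestronglyMeasurable_heatFlow hf.continuous t), hbound⟩
  have hflow : MemLp (heatFlow t f) p := by simpa using hfp.sub hsub
  have hdiff := ENNReal.toReal_mono
    (ENNReal.mul_ne_top ENNReal.ofReal_ne_top hf'.eLpNorm_ne_top) hle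
  rw [ENNReal.toReal_mul, ENNReal.toReal_ofReal (by positivity)] at hdiff
  have htri := lpNorm_le_lpNorm_add_lpNorm_sub' (f := f) hflow hp
  rw [← toReal_eLpNorm hfp.1, ← toReal_eLpNorm hflow.1, ← toReal_eLpNorm hsub.1] at htri
  linarith

end HeatFlow

section Interpolation

-- The bound is attained by the `t` with `t ^ (a + b) = M / D`, which makes the two terms equal.
theorem le_two_mul_rpow_mul_rpow_of_forall_le_of_pos {N D M a b : ℝ} (ha : 0 < a) (hb : 0 < b)
    (hD : 0 < D) (hM : 0 < M) (h : ∀ t : ℝ, 0 < t → N ≤ t ^ (-a) * M + t ^ b * D) :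
    N ≤ 2 * D ^ (a / (a + b)) * M ^ (b / (a + b)) := by
  have hab : 0 < a + b := add_pos ha hb
  set t := (M / D) ^ (a + b)⁻¹ with ht_def
  have ht : 0 < t := by positivity
  have hbalance : t ^ (-a) * M = t ^ b * D := by
    have hM_eq : M = t ^ (a + b) * D := by
      rw [ht_def, rpow_inv_rpow (by positivity) hab.ne', div_mul_cancel₀ M hD.ne']
    rw [hM_eq, ← mul_assoc, ← rpow_add ht, neg_add_cancel_left]
  have hvalue : t ^ b * D = D ^ (a / (a + b)) * M ^ (b / (a + b)) := by
    have hsplit : D = D ^ (a / (a + b)) * D ^ (b / (a + b)) := by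
      rw [← rpow_add hD, ← add_div, div_self hab.ne', rpow_one]
    rw [ht_def, ← rpow_mul (by positivity), inv_mul_eq_div, div_rpow hM.le hD.le]
    nth_rw 2 [hsplit]
    field_simp
  linarith [h t ht]

theorem le_two_mul_rpow_mul_rpow_of_forall_le {N D M a b : ℝ} (ha : 0 < a) (hb : 0 < b)
    (hD : 0 ≤ D) (hM : 0 ≤ M) (h : ∀ t : ℝ, 0 < t → N ≤ t ^ (-a) * M + t ^ b * D) :
    N ≤ 2 * D ^ (a / (a + b)) * M ^ (b / (a + b)) := by
  have hperturbed : ∀ ε > 0, N ≤ 2 * (D + ε) ^ (a / (a + b)) * (M + ε) ^ (b / (a + b)) := by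
    intro ε hε
    refine le_two_mul_rpow_mul_rpow_of_forall_le_of_pos ha hb (by positivity) (by positivity)
      fun t ht => (h t ht).trans ?_
    gcongr <;> linarith
  have hcont : Continuous fun ε => 2 * (D + ε) ^ (a / (a + b)) * (M + ε) ^ (b / (a + b)) := by
    have : 0 ≤ a / (a + b) := by positivity
    have : 0 ≤ b / (a + b) := by positivity
    fun_prop (disch := assumption)
  have hlim := (hcont.tendsto 0).mono_left (nhdsWithin_le_nhds (s := Set.Ioi 0))
  simp only [add_zero] at hlim
  exact ge_of_tendsto hlim (eventually_nhdsWithin_of_forall hperturbed)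

end Interpolation

theorem stmt_5_general {V F : Type*} [NormedAddCommGroup V] [InnerProductSpace ℝ V]
    [FiniteDimensional ℝ V] [MeasurableSpace V] [BorelSpace V] [NormedAddCommGroup F]
    [NormedSpace ℝ F] [CompleteSpace F] {p : ℝ≥0∞} (hp : 1 ≤ p) (hp_top : p ≠ ∞) {s : ℝ}
    (hs : 0 < s) :
    ∃ C : ℝ, 0 < C ∧
      ∀ f : V → F, ContDiff ℝ 1 f → MemLp f p volume → MemLp (fderiv ℝ f) p volume → ∀ M : ℝ,
        (∀ t : ℝ, 0 < t → t ^ (s / 2) * (eLpNorm (heatFlow t f) p volume).toReal ≤ M) →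
        (eLpNorm f p volume).toReal ≤
          C * (eLpNorm (fderiv ℝ f) p volume).toReal ^ (s / (s + 1)) * M ^ (1 / (s + 1)) := by
  have hq : 0 < p.toReal := ENNReal.toReal_pos (one_pos.trans_le hp).ne' hp_top
  set K : ℝ := 2 ^ (Module.finrank ℝ V / (2 * p.toReal)) * √(4 * p.toReal)
  have hK : 0 < K := by positivity
  refine ⟨2 * K ^ (s / (s + 1)), by positivity, fun f hf hfp hf' M hM => ?_⟩
  set D := (eLpNorm (fderiv ℝ f) p volume).toReal
  have hM0 : 0 ≤ M := le_trans (by positivity) (hM 1 one_pos)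
  have hsplit (t : ℝ) (ht : 0 < t) :
      (eLpNorm f p volume).toReal ≤ t ^ (-(s / 2)) * M + t ^ (1 / 2 : ℝ) * (K * D) := by
    have hflow : (eLpNorm (heatFlow t f) p volume).toReal ≤ t ^ (-(s / 2)) * M := by
      rw [rpow_neg ht.le, ← div_eq_inv_mul, le_div_iff₀' (by positivity)]
      exact hM t ht
    have hadd := toReal_eLpNorm_le_toReal_eLpNorm_heatFlow_add hf hp hp_top hfp hf' ht
    rw [← sqrt_eq_rpow]
    linarith
  have hopt := le_two_mul_rpow_mul_rpow_of_forall_le (half_pos hs) one_half_pos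
    (by positivity) hM0 hsplit
  rwa [← add_div, div_div_div_cancel_right₀ two_ne_zero, div_div_div_cancel_right₀ two_ne_zero,
    mul_rpow hK.le ENNReal.toReal_nonneg, ← mul_assoc] at hopt

theorem heatSemigroup_eq_heatFlow : heatSemigroup = heatFlow := by
  ext t z x
  simp [heatSemigroup, heatFlow, heatKernel]

theorem stmt_5 :
    ∃ C : ℝ, 0 < C ∧
      ∀ z : SchwartzMap (EuclideanSpace ℝ (Fin 3)) ℝ, ∀ M : ℝ,
        (∀ t : ℝ, 0 < t →
          t ^ ((3:ℝ)/4) * (eLpNorm (heatSemigroup t ⇑z) 2 volume).toReal ≤ M) →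
        (eLpNorm (⇑z) 2 volume).toReal ≤
          C * (eLpNorm (fun y => ‖fderiv ℝ (⇑z) y‖) 2 volume).toReal ^ ((3:ℝ)/5) *
            M ^ ((2:ℝ)/5) := by
  obtain ⟨C, hC, hbound⟩ := stmt_5_general (V := EuclideanSpace ℝ (Fin 3)) (F := ℝ) (p := 2)
    one_le_two ENNReal.ofNat_ne_top (s := 3 / 2) (by norm_num)
  refine ⟨C, hC, fun z M hM => ?_⟩
  have hz' : MemLp (fderiv ℝ z) 2 volume := (SchwartzMap.fderivCLM ℝ _ ℝ z).memLp 2 volume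
  have hz := hbound z (z.smooth 1) (z.memLp 2) hz' M
  norm_num [← heatSemigroup_eq_heatFlow, eLpNorm_norm] at hz ⊢
  exact hz hM
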